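/- (Lemma 2, '◇' identity for unswapped positions.) Let W be a binary-input discrete memoryless channel with finite output alphabet 𝒴, let n ≥ 4 be even, let A be an (n/2)×(n/2) matrix over 𝔽₂, let 𝓘 ⊆ {1,…,n−1} satisfy the separation condition, and set Gₙ := P_𝓘·(A ⊗ G₂). Suppose 1 ≤ i ≤ n/2−1 and 2i ∉ 𝓘. Then for all y ∈ 𝒴ⁿ and all u₁,…,u_{2i+1} ∈ 𝔽₂: V_{2i}^{Gₙ}(y, (u₁,…,u_{2i−1}) | u_{2i}, u_{2i+1}) = (1/4)·∑_{d∈𝔽₂} V_i^A(y_odd, (ũ₁,ũ₃,…,ũ_{2i−3}) | û_{2i−1}+u_{2i}, u_{2i+1}+d)·V_i^A(y_even, (ũ₂,ũ₄,…,ũ_{2i−2}) | u_{2i}, d), where û_{2i−1} = u_{2i−2} if 2(i−1) ∈ 𝓘 and û_{2i−1} = u_{2i−1} otherwise. This is the identity V_{2i}^{Gₙ} = (V_i^A)^◇, which covers Cases ii)–v) of Lemma 2. -/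

import Mathlib

/-!
Since `W` is stochastic and the message uniform, the conditioning event of an adjacent-bits-channel
has probability `1/4`, so that `V_i^M(y, pre | a, b)` is `4 · 2^{-m}` times the sum of the codeword
likelihoods `∏ⱼ W(yⱼ | (vM)ⱼ)` over the messages `v` extending `(pre, a, b)`
(`adjChannel_eq_sum`).

The map `v ↦ (s, t)`, `sⱼ = v̂_{2j} + v̂_{2j+1}`, `tⱼ = v̂_{2j+1}`, with `v̂ = v P_𝓘`, is a bijection
from messages of length `2m` to pairs of messages of length `m` (`splitEquiv`). The even-indexed
part of the codeword `v P_𝓘 (A ⊗ G₂)` is `sA` and its odd-indexed part is `tA`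
(`vecMul_even`, `vecMul_odd`), so the likelihood of `v` is the product of those of `s` and `t`.
Finally, `2i ∉ 𝓘` means that `P_𝓘` preserves the first `2i` coordinates and fixes the next one;
hence `v` agrees with `u` on coordinates `0, …, 2i` if and only if `(s, t)` satisfies the two
constraints on the right-hand side with `d = tᵢ` (`constraint_iff`), and summing over `d` merely
removes the constraint on `tᵢ`.
-/

open scoped Classical

/-- Probability of an event `E` under a pmf `P` on a finite space. -/
noncomputable def prob {Ω : Type*} [Fintype Ω] (P : Ω → ℝ) (E : Ω → Prop) : ℝ :=
  ∑ ω : Ω, if E ω then P ω else 0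

/-- The polar-coding model `μ_G`: the joint pmf on message/output pairs, where the message
`u` is uniform on `𝔽₂ⁿ`, the codeword is `uG`, and each coordinate is sent through the
binary-input channel `W` (here `W x y` denotes the transition probability `W(y|x)`). -/
noncomputable def polarPMF {𝒴 : Type*} [Fintype 𝒴] {n : ℕ}
    (W : ZMod 2 → 𝒴 → ℝ) (G : Matrix (Fin n) (Fin n) (ZMod 2)) :
    (Fin n → ZMod 2) × (Fin n → 𝒴) → ℝ :=
  fun p => (1 / 2 : ℝ) ^ n * ∏ j, W (Matrix.vecMul p.1 G j) (p.2 j)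

/-- The adjacent-bits-channel `V_i^M` of the model `μ_M` (0-based index `i`):
`V_i^M(y, (u_0, …, u_{i-1}) | a, b) = P(Y = y, U_0 = u_0, …, U_{i-1} = u_{i-1} | U_i = a, U_{i+1} = b)`.
Only the values `upre j` for `j < i` are relevant. -/
noncomputable def adjChannel {𝒴 : Type*} [Fintype 𝒴] {m : ℕ}
    (W : ZMod 2 → 𝒴 → ℝ) (M : Matrix (Fin m) (Fin m) (ZMod 2))
    (i : ℕ) (y : Fin m → 𝒴) (upre : ℕ → ZMod 2) (a b : ZMod 2) : ℝ :=
  prob (polarPMF W M)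
      (fun p => p.2 = y ∧ ∀ j : Fin m,
        (j.val < i → p.1 j = upre j.val) ∧ (j.val = i → p.1 j = a) ∧
          (j.val = i + 1 → p.1 j = b)) /
    prob (polarPMF W M)
      (fun p => ∀ j : Fin m, (j.val = i → p.1 j = a) ∧ (j.val = i + 1 → p.1 j = b))

/-- The 2×2 Arıkan kernel `G₂ = [[1,0],[1,1]]` over `𝔽₂`. -/
def G2 : Matrix (Fin 2) (Fin 2) (ZMod 2) := !![1, 0; 1, 1]

/-- The Kronecker product `A ⊗ G₂` under the interleaved index identification
`(j, k) ↦ 2j + k` (0-based): `(A ⊗ G₂)(r, c) = A(r/2, c/2) · G₂(r%2, c%2)`. -/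
def interKron {m : ℕ} (A : Matrix (Fin m) (Fin m) (ZMod 2)) :
    Matrix (Fin (2 * m)) (Fin (2 * m)) (ZMod 2) :=
  fun r c =>
    A ⟨r.val / 2, by have := r.isLt; omega⟩ ⟨c.val / 2, by have := c.isLt; omega⟩ *
      G2 ⟨r.val % 2, by omega⟩ ⟨c.val % 2, by omega⟩

/-- The (0-based) index map of the permutation `P_𝓘`: for each (1-based, paper) index
`i ∈ 𝓘`, the coordinates `i − 1` and `i` (0-based) are exchanged (so that
`(u P_𝓘)_j = u_{swapPerm 𝓘 j}` under the separation condition). -/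
def swapPerm (I : Finset ℕ) (j : ℕ) : ℕ :=
  if j + 1 ∈ I then j + 1 else if j ∈ I then j - 1 else j

/-- The `n×n` permutation matrix `P_𝓘` over `𝔽₂`. -/
def permMatrix (I : Finset ℕ) (n : ℕ) : Matrix (Fin n) (Fin n) (ZMod 2) :=
  fun r c => if swapPerm I r.val = c.val then 1 else 0

/-! ### Adjacent-bits-channels as sums of likelihoods -/

/-- The likelihood `∏ⱼ W(yⱼ | (vM)ⱼ)` of the message `v` given the output `y`. -/
noncomputable def likelihood {𝒴 : Type*} {m : ℕ} (W : ZMod 2 → 𝒴 → ℝ)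
    (M : Matrix (Fin m) (Fin m) (ZMod 2)) (y : Fin m → 𝒴) (v : Fin m → ZMod 2) : ℝ :=
  ∏ j, W (Matrix.vecMul v M j) (y j)

/-- The message `v` extends `(upre 0, …, upre (i - 1), a, b)`. -/
def Extends {m : ℕ} (i : ℕ) (upre : ℕ → ZMod 2) (a b : ZMod 2) (v : Fin m → ZMod 2) : Prop :=
  ∀ j : Fin m, (j.val < i → v j = upre j.val) ∧ (j.val = i → v j = a) ∧
    (j.val = i + 1 → v j = b)

lemma card_two_fixed {m : ℕ} (i : ℕ) (hi : i + 1 < m) (a b : ZMod 2) :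
    (∑ v : Fin m → ZMod 2,
      if (∀ j : Fin m, (j.val = i → v j = a) ∧ (j.val = i + 1 → v j = b)) then (1 : ℝ) else 0) =
      2 ^ m / 4 := by
  have h1 : ∀ v : Fin m → ZMod 2,
      (if (∀ j : Fin m, (j.val = i → v j = a) ∧ (j.val = i + 1 → v j = b)) then (1 : ℝ) else 0) =
      ∏ j, if (j.val = i → v j = a) ∧ (j.val = i + 1 → v j = b) then (1 : ℝ) else 0 := by
    intro v
    rw [Finset.prod_ite_zero]
    simp
  simp_rw [h1]
  rw [← Fintype.prod_sum (fun (j : Fin m) (x : ZMod 2) =>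
    if (j.val = i → x = a) ∧ (j.val = i + 1 → x = b) then (1 : ℝ) else 0)]
  rw [eq_div_iff (by norm_num)]
  have h2 : (4 : ℝ) = (∏ j : Fin m, if j = ⟨i, by omega⟩ then (2 : ℝ) else 1) *
      (∏ j : Fin m, if j = ⟨i + 1, hi⟩ then (2 : ℝ) else 1) := by
    simp only [Finset.prod_ite_eq', Finset.mem_univ, if_true]
    norm_num
  rw [h2, ← Finset.prod_mul_distrib, ← Finset.prod_mul_distrib]
  have h3 : (2 : ℝ) ^ m = ∏ _j : Fin m, (2 : ℝ) := by simp
  rw [h3]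
  refine Finset.prod_congr rfl fun j _ => ?_
  by_cases ha : j.val = i
  · have hb : ¬ j.val = i + 1 := by omega
    simp [Fin.ext_iff, ha]
  · by_cases hb : j.val = i + 1
    · simp [Fin.ext_iff, hb]
    · simp [Fin.ext_iff, ha, hb]

lemma prob_cond {𝒴 : Type*} [Fintype 𝒴] (W : ZMod 2 → 𝒴 → ℝ) (hW1 : ∀ x, ∑ y, W x y = 1)
    {m : ℕ} (M : Matrix (Fin m) (Fin m) (ZMod 2)) (i : ℕ) (hi : i + 1 < m) (a b : ZMod 2) :
    prob (polarPMF W M)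
      (fun p => ∀ j : Fin m, (j.val = i → p.1 j = a) ∧ (j.val = i + 1 → p.1 j = b)) = 1 / 4 := by
  unfold prob polarPMF
  rw [Fintype.sum_prod_type]
  have h : ∀ v : Fin m → ZMod 2,
      (∑ y : Fin m → 𝒴,
        if (∀ j : Fin m, (j.val = i → v j = a) ∧ (j.val = i + 1 → v j = b)) then
          (1 / 2 : ℝ) ^ m * ∏ j, W (Matrix.vecMul v M j) (y j) else 0) =
      (1 / 2 : ℝ) ^ m *
        if (∀ j : Fin m, (j.val = i → v j = a) ∧ (j.val = i + 1 → v j = b)) then 1 else 0 := by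
    intro v
    split_ifs
    · rw [← Finset.mul_sum,
        ← Fintype.prod_sum (fun (j : Fin m) (z : 𝒴) => W (Matrix.vecMul v M j) z)]
      simp [hW1]
    · simp
  simp only [h]
  rw [← Finset.mul_sum, card_two_fixed i hi a b, ← mul_div_assoc, ← mul_pow]
  norm_num

lemma adjChannel_eq_sum {𝒴 : Type*} [Fintype 𝒴] (W : ZMod 2 → 𝒴 → ℝ)
    (hW1 : ∀ x, ∑ y, W x y = 1) {m : ℕ} (M : Matrix (Fin m) (Fin m) (ZMod 2)) (i : ℕ)
    (hi : i + 1 < m) (y : Fin m → 𝒴) (upre : ℕ → ZMod 2) (a b : ZMod 2) :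
    adjChannel W M i y upre a b =
      4 * (1 / 2 : ℝ) ^ m *
        ∑ v : Fin m → ZMod 2, if Extends i upre a b v then likelihood W M y v else 0 := by
  unfold adjChannel
  rw [prob_cond W hW1 M i hi]
  unfold prob polarPMF
  rw [Fintype.sum_prod_type]
  have h : ∀ v : Fin m → ZMod 2,
      (∑ z : Fin m → 𝒴, if z = y ∧ Extends i upre a b v then
        (1 / 2 : ℝ) ^ m * ∏ j, W (Matrix.vecMul v M j) (z j) else 0) =
      (1 / 2 : ℝ) ^ m * if Extends i upre a b v then likelihood W M y v else 0 := by
    intro v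
    simp only [ite_and, Finset.sum_ite_eq', Finset.mem_univ, if_true, likelihood, mul_ite, mul_zero]
  have h' := (Finset.sum_congr rfl fun v _ => h v).trans (Finset.mul_sum Finset.univ _ _).symm
  refine (congrArg (· / (1 / 4 : ℝ)) (Eq.trans ?_ h')).trans (by ring)
  refine Finset.sum_congr rfl fun v _ => Finset.sum_congr rfl fun z _ => ?_
  unfold Extends
  congr

/-! ### Even and odd coordinates -/

/-- The even index `2j`. -/
def evenIdx {m : ℕ} (j : Fin m) : Fin (2 * m) := ⟨2 * j.val, by have := j.isLt; omega⟩

/-- The odd index `2j + 1`. -/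
def oddIdx {m : ℕ} (j : Fin m) : Fin (2 * m) := ⟨2 * j.val + 1, by have := j.isLt; omega⟩

@[to_additive]
lemma prod_even_odd {R : Type*} [CommMonoid R] {m : ℕ} (f : Fin (2 * m) → R) :
    ∏ r, f r = (∏ j : Fin m, f (evenIdx j)) * ∏ j : Fin m, f (oddIdx j) := by
  rw [← Equiv.prod_comp (finProdFinEquiv.trans (finCongr (Nat.mul_comm m 2))) f,
    Fintype.prod_prod_type, ← Finset.prod_mul_distrib]
  refine Finset.prod_congr rfl fun j _ => ?_
  rw [Fin.prod_univ_two]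
  congr 2 <;> apply Fin.ext <;> simp [evenIdx, oddIdx, finProdFinEquiv]
  omega

/-! ### The permutation `P_𝓘` -/

/-- All elements of `𝓘` are even and lie in `[1, 2m - 1]`. This already makes `swapPerm 𝓘` an
involution of `{0, …, 2m - 1}`. -/
def Good (I : Finset ℕ) (m : ℕ) : Prop := ∀ x ∈ I, 2 ∣ x ∧ 1 ≤ x ∧ x ≤ 2 * m - 1

lemma swapPerm_even {I : Finset ℕ} {m : ℕ} (hI : Good I m) (t : ℕ) :
    swapPerm I (2 * t) = if 2 * t ∈ I then 2 * t - 1 else 2 * t := by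
  have : 2 * t + 1 ∉ I := fun h => by have := hI _ h; omega
  simp [swapPerm, this]

lemma swapPerm_odd {I : Finset ℕ} {m : ℕ} (hI : Good I m) (t : ℕ) :
    swapPerm I (2 * t + 1) = if 2 * (t + 1) ∈ I then 2 * (t + 1) else 2 * t + 1 := by
  have : 2 * t + 1 ∉ I := fun h => by have := hI _ h; omega
  simp [swapPerm, this, mul_add]

lemma swapPerm_invol {I : Finset ℕ} {m : ℕ} (hI : Good I m) (r : ℕ) :
    swapPerm I (swapPerm I r) = r := by
  rcases Nat.even_or_odd' r with ⟨t, rfl | rfl⟩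
  · rw [swapPerm_even hI]
    split_ifs with h
    · have h2 := hI _ h
      obtain ⟨k, rfl⟩ : ∃ k, t = k + 1 := ⟨t - 1, by omega⟩
      rw [show 2 * (k + 1) - 1 = 2 * k + 1 by omega, swapPerm_odd hI, if_pos h]
    · rw [swapPerm_even hI, if_neg h]
  · rw [swapPerm_odd hI]
    split_ifs with h
    · rw [swapPerm_even hI, if_pos h]
      omega
    · rw [swapPerm_odd hI, if_neg h]

lemma swapPerm_lt {I : Finset ℕ} {m : ℕ} (hI : Good I m) {r : ℕ} (hr : r < 2 * m) :
    swapPerm I r < 2 * m := by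
  unfold swapPerm
  split_ifs with h h'
  · have := hI _ h; omega
  · omega
  · exact hr

/-- An exchange across the boundary between coordinates `2i` and `2i + 1` would be indexed by the
odd number `2i + 1`, which is not in `𝓘`. -/
lemma swapPerm_le {I : Finset ℕ} {m : ℕ} (hI : Good I m) {i : ℕ} {r : ℕ} (hr : r ≤ 2 * i) :
    swapPerm I r ≤ 2 * i := by
  unfold swapPerm
  split_ifs with h h'
  · have := hI _ h; omega
  · omega
  · exact hr

/-- The index permutation of `P_𝓘` as a map on `Fin (2m)`. -/
def swapFin {I : Finset ℕ} {m : ℕ} (hI : Good I m) (r : Fin (2 * m)) : Fin (2 * m) :=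
  ⟨swapPerm I r.val, swapPerm_lt hI r.isLt⟩

lemma swapFin_invol {I : Finset ℕ} {m : ℕ} (hI : Good I m) (r : Fin (2 * m)) :
    swapFin hI (swapFin hI r) = r :=
  Fin.ext (swapPerm_invol hI r.val)

lemma vecMul_perm {I : Finset ℕ} {m : ℕ} (hI : Good I m) (v : Fin (2 * m) → ZMod 2) :
    Matrix.vecMul v (permMatrix I (2 * m)) = fun c => v (swapFin hI c) := by
  funext c
  have h : ∀ r : Fin (2 * m), (swapPerm I r.val = c.val) ↔ r = swapFin hI c := by
    intro r
    constructor
    · intro h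
      have : swapFin hI r = c := Fin.ext h
      rw [← this, swapFin_invol]
    · rintro rfl
      exact swapPerm_invol hI c.val
  simp [Matrix.vecMul, dotProduct, permMatrix, h]

/-! ### Splitting a message and its codeword -/

/-- The bijection `v ↦ (s, t)` with `sⱼ = v̂_{2j} + v̂_{2j+1}` and `tⱼ = v̂_{2j+1}`, where
`v̂ = v P_𝓘`. -/
def splitEquiv {I : Finset ℕ} {m : ℕ} (hI : Good I m) :
    (Fin (2 * m) → ZMod 2) ≃ (Fin m → ZMod 2) × (Fin m → ZMod 2) where
  toFun v := (fun j => v (swapFin hI (evenIdx j)) + v (swapFin hI (oddIdx j)),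
    fun j => v (swapFin hI (oddIdx j)))
  invFun p r :=
    let j : Fin m := ⟨(swapFin hI r).val / 2, by have := (swapFin hI r).isLt; omega⟩
    if (swapFin hI r).val % 2 = 0 then p.1 j + p.2 j else p.2 j
  left_inv v := by
    funext r
    obtain ⟨q, rfl⟩ : ∃ q, r = swapFin hI q := ⟨swapFin hI r, (swapFin_invol hI r).symm⟩
    simp only [swapFin_invol]
    split_ifs with h
    · rw [add_assoc, CharTwo.add_self_eq_zero, add_zero]
      congr 2
      apply Fin.ext
      simp only [evenIdx]
      omega
    · congr 2
      apply Fin.ext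
      simp only [oddIdx]
      omega
  right_inv p := by
    have h1 : ∀ j : Fin m, (2 * j.val + 1) / 2 = j.val := fun j => by omega
    have h2 : ∀ j : Fin m, (2 * j.val + 1) % 2 = 1 := fun j => by omega
    refine Prod.ext ?_ ?_ <;> funext j
    · simp [swapFin_invol, evenIdx, oddIdx, h1, h2, add_assoc, CharTwo.add_self_eq_zero]
    · simp [swapFin_invol, oddIdx, h1, h2]

lemma vecMul_even {I : Finset ℕ} {m : ℕ} (hI : Good I m) (A : Matrix (Fin m) (Fin m) (ZMod 2))
    (v : Fin (2 * m) → ZMod 2) (l : Fin m) :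
    Matrix.vecMul v (permMatrix I (2 * m) * interKron A) (evenIdx l) =
      Matrix.vecMul (splitEquiv hI v).1 A l := by
  have h1 : ∀ j : Fin m, (2 * j.val + 1) / 2 = j.val := fun j => by omega
  have h2 : ∀ j : Fin m, (2 * j.val + 1) % 2 = 1 := fun j => by omega
  rw [← Matrix.vecMul_vecMul, vecMul_perm hI]
  simp only [Matrix.vecMul, dotProduct]
  rw [sum_even_odd, ← Finset.sum_add_distrib]
  refine Finset.sum_congr rfl fun j _ => ?_
  simp [interKron, splitEquiv, evenIdx, oddIdx, h1, h2, G2]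
  ring

lemma vecMul_odd {I : Finset ℕ} {m : ℕ} (hI : Good I m) (A : Matrix (Fin m) (Fin m) (ZMod 2))
    (v : Fin (2 * m) → ZMod 2) (l : Fin m) :
    Matrix.vecMul v (permMatrix I (2 * m) * interKron A) (oddIdx l) =
      Matrix.vecMul (splitEquiv hI v).2 A l := by
  have h1 : ∀ j : Fin m, (2 * j.val + 1) / 2 = j.val := fun j => by omega
  have h2 : ∀ j : Fin m, (2 * j.val + 1) % 2 = 1 := fun j => by omega
  rw [← Matrix.vecMul_vecMul, vecMul_perm hI]
  simp only [Matrix.vecMul, dotProduct]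
  rw [sum_even_odd, ← Finset.sum_add_distrib]
  refine Finset.sum_congr rfl fun j _ => ?_
  simp [interKron, splitEquiv, evenIdx, oddIdx, h1, h2, G2]

lemma likelihood_split {𝒴 : Type*} (W : ZMod 2 → 𝒴 → ℝ) {I : Finset ℕ} {m : ℕ} (hI : Good I m)
    (A : Matrix (Fin m) (Fin m) (ZMod 2)) (y : Fin (2 * m) → 𝒴) (v : Fin (2 * m) → ZMod 2) :
    likelihood W (permMatrix I (2 * m) * interKron A) y v =
      likelihood W A (fun j => y (evenIdx j)) (splitEquiv hI v).1 *
        likelihood W A (fun j => y (oddIdx j)) (splitEquiv hI v).2 := by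
  unfold likelihood
  rw [prod_even_odd]
  simp_rw [vecMul_even hI, vecMul_odd hI]

/-! ### Matching the constraints -/

/-- Agreement of `v` and `u` on the coordinates `0, …, 2k + 2` is the same as agreement of their
images under `P_𝓘`, because `swapPerm` preserves `{0, …, 2k + 2}`. -/
lemma extends_iff_swap {I : Finset ℕ} {m : ℕ} (hI : Good I m) (k : ℕ)
    (u : ℕ → ZMod 2) (v : Fin (2 * m) → ZMod 2) :
    Extends (2 * k + 1) u (u (2 * k + 1)) (u (2 * k + 2)) v ↔
      ∀ r : Fin (2 * m), r.val ≤ 2 * k + 2 → v (swapFin hI r) = u (swapPerm I r.val) := by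
  have h : Extends (2 * k + 1) u (u (2 * k + 1)) (u (2 * k + 2)) v ↔
      ∀ r : Fin (2 * m), r.val ≤ 2 * k + 2 → v r = u r.val := by
    constructor
    · intro h r hr
      obtain ⟨h1, h2, h3⟩ := h r
      rcases Nat.lt_trichotomy r.val (2 * k + 1) with h' | h' | h'
      · exact h1 h'
      · rw [h2 h', h']
      · have h'' : r.val = 2 * k + 2 := by omega
        rw [h3 h'', h'']
    · intro h r
      refine ⟨fun h' => h r (by omega), fun h' => ?_, fun h' => ?_⟩
      · rw [h r (by omega), h']
      · rw [h r (by omega), h']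
  rw [h]
  constructor
  · intro h r hr
    exact h (swapFin hI r) (swapPerm_le hI (i := k + 1) hr)
  · intro h r hr
    have := h (swapFin hI r) (swapPerm_le hI (i := k + 1) hr)
    rwa [swapFin_invol, show swapPerm I (swapFin hI r).val = r.val from
      swapPerm_invol hI r.val] at this

/-- For `v` with image `(s, t)`, the two constraints on the right-hand side of the `◇` identity hold
for `d` exactly when `d = t_{k+1}` and `v` agrees with `u` on the coordinates `0, …, 2k + 2`. -/
lemma constraint_iff {I : Finset ℕ} {m : ℕ} (hI : Good I m) (k : ℕ) (hk : k + 1 < m)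
    (hmem : 2 * (k + 1) ∉ I) (u : ℕ → ZMod 2) (v : Fin (2 * m) → ZMod 2) (d : ZMod 2) :
    (Extends k (fun t => u (swapPerm I (2 * t)) + u (swapPerm I (2 * t + 1)))
        (u (swapPerm I (2 * k)) + u (2 * k + 1)) (u (2 * k + 2) + d) (splitEquiv hI v).1 ∧
      Extends k (fun t => u (swapPerm I (2 * t + 1))) (u (2 * k + 1)) d (splitEquiv hI v).2) ↔
    ((splitEquiv hI v).2 ⟨k + 1, hk⟩ = d ∧
      Extends (2 * k + 1) u (u (2 * k + 1)) (u (2 * k + 2)) v) := by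
  have hodd : swapPerm I (2 * k + 1) = 2 * k + 1 := by rw [swapPerm_odd hI, if_neg hmem]
  have heven : swapPerm I (2 * k + 2) = 2 * k + 2 := by
    rw [show 2 * k + 2 = 2 * (k + 1) by ring, swapPerm_even hI, if_neg hmem]
  rw [extends_iff_swap hI]
  have hadd : ∀ a b c : ZMod 2, a + c = b + c → a = b := fun a b c h => add_right_cancel h
  constructor
  · rintro ⟨h1, h2⟩
    have ht : ∀ j : Fin m, j.val ≤ k →
        v (swapFin hI (oddIdx j)) = u (swapPerm I (2 * j.val + 1)) := by
      intro j hj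
      rcases hj.lt_or_eq with h | h
      · exact (h2 j).1 h
      · rw [h, hodd]; exact (h2 j).2.1 h
    have hs : ∀ j : Fin m, j.val ≤ k →
        v (swapFin hI (evenIdx j)) = u (swapPerm I (2 * j.val)) := by
      intro j hj
      apply hadd _ _ (v (swapFin hI (oddIdx j)))
      rcases hj.lt_or_eq with h | h
      · refine ((h1 j).1 h).trans ?_
        rw [ht j hj]
      · refine ((h1 j).2.1 h).trans ?_
        rw [ht j hj, h, hodd]
    have hd : (splitEquiv hI v).2 ⟨k + 1, hk⟩ = d := (h2 ⟨k + 1, hk⟩).2.2 rfl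
    refine ⟨hd, fun r hr => ?_⟩
    rcases Nat.even_or_odd' r.val with ⟨t, h | h⟩
    · have hr' : r = evenIdx ⟨t, by omega⟩ := Fin.ext h
      by_cases htk : t ≤ k
      · rw [hr']; exact hs _ htk
      · have htk' : t = k + 1 := by omega
        subst htk'
        have h3 := (h1 ⟨k + 1, hk⟩).2.2 rfl
        rw [← hd] at h3
        rw [h, show 2 * (k + 1) = 2 * k + 2 by ring, heven, hr']
        exact hadd _ _ _ h3
    · have hr' : r = oddIdx ⟨t, by omega⟩ := Fin.ext h
      rw [hr']
      exact ht _ (by simp only; omega)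
  · rintro ⟨hd, h⟩
    have ht : ∀ j : Fin m, j.val ≤ k →
        v (swapFin hI (oddIdx j)) = u (swapPerm I (2 * j.val + 1)) :=
      fun j hj => h (oddIdx j) (by simp only [oddIdx]; omega)
    have hs : ∀ j : Fin m, j.val ≤ k + 1 →
        v (swapFin hI (evenIdx j)) = u (swapPerm I (2 * j.val)) :=
      fun j hj => h (evenIdx j) (by simp only [evenIdx]; omega)
    refine ⟨fun j => ⟨fun hj => ?_, fun hj => ?_, fun hj => ?_⟩,
      fun j => ⟨fun hj => ht j hj.le, fun hj => ?_, fun hj => ?_⟩⟩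
    · exact congrArg₂ (· + ·) (hs j (by omega)) (ht j hj.le)
    · refine (congrArg₂ (· + ·) (hs j (by omega)) (ht j hj.le)).trans ?_
      simp only [hj, hodd]
    · have hj' : j = ⟨k + 1, hk⟩ := Fin.ext hj
      have h3 := hs j hj.le
      rw [hj, show 2 * (k + 1) = 2 * k + 2 by ring, heven] at h3
      rw [← hd, ← h3, ← hj']
      rfl
    · refine (ht j hj.le).trans ?_
      rw [hj, hodd]
    · have hj' : j = ⟨k + 1, hk⟩ := Fin.ext hj
      rw [← hd, hj']

/-- Lemma 2, '◇' identity for unswapped positions (`2i ∉ 𝓘`): `V_{2i}^{Gₙ} = (V_i^A)^◇`,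
covering Cases ii)–v) (paper's 1-based index `i`, `n = 2m ≥ 4`; the channels below use
0-based indices, `û = u ∘ swapPerm 𝓘`, and `û_{2i−1} = u_{2i−2}` if `2(i−1) ∈ 𝓘`,
`û_{2i−1} = u_{2i−1}` otherwise). -/
theorem abs_adjChannel_lozenge {𝒴 : Type*} [Fintype 𝒴]
    (W : ZMod 2 → 𝒴 → ℝ) (hW0 : ∀ x y, 0 ≤ W x y) (hW1 : ∀ x, ∑ y, W x y = 1)
    (m : ℕ) (hm : 2 ≤ m) (A : Matrix (Fin m) (Fin m) (ZMod 2))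
    (I : Finset ℕ)
    (hIrange : ∀ x ∈ I, 1 ≤ x ∧ x ≤ 2 * m - 1)
    (hIeven : ∀ x ∈ I, 2 ∣ x)
    (hIsep : ∀ x ∈ I, ∀ z ∈ I, x ≠ z → x + 4 ≤ z ∨ z + 4 ≤ x)
    (i : ℕ) (hi1 : 1 ≤ i) (hi2 : i ≤ m - 1) (hmem : 2 * i ∉ I)
    (y : Fin (2 * m) → 𝒴) (u : ℕ → ZMod 2) :
    adjChannel W (permMatrix I (2 * m) * interKron A) (2 * i - 1) y u
        (u (2 * i - 1)) (u (2 * i)) =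
      (1 / 4 : ℝ) * ∑ d : ZMod 2,
        adjChannel W A (i - 1) (fun j => y ⟨2 * j.val, by have := j.isLt; omega⟩)
            (fun t => u (swapPerm I (2 * t)) + u (swapPerm I (2 * t + 1)))
            ((if 2 * (i - 1) ∈ I then u (2 * i - 3) else u (2 * i - 2)) + u (2 * i - 1))
            (u (2 * i) + d) *
          adjChannel W A (i - 1) (fun j => y ⟨2 * j.val + 1, by have := j.isLt; omega⟩)
            (fun t => u (swapPerm I (2 * t + 1))) (u (2 * i - 1)) d := by
  have hI : Good I m := fun x hx => ⟨hIeven x hx, hIrange x hx⟩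
  obtain ⟨k, rfl⟩ : ∃ k, i = k + 1 := ⟨i - 1, by omega⟩
  have hk : k + 1 < m := by omega
  have e1 : 2 * (k + 1) - 1 = 2 * k + 1 := by omega
  have e3 : (if 2 * (k + 1 - 1) ∈ I then u (2 * (k + 1) - 3) else u (2 * (k + 1) - 2)) =
      u (swapPerm I (2 * k)) := by
    rw [swapPerm_even hI, Nat.add_sub_cancel, show 2 * (k + 1) - 3 = 2 * k - 1 by omega,
      show 2 * (k + 1) - 2 = 2 * k by omega]
    split_ifs <;> rfl
  rw [e1, e3, Nat.add_sub_cancel]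
  rw [adjChannel_eq_sum W hW1 _ _ (by omega)]
  simp_rw [adjChannel_eq_sum W hW1 A k hk]
  rw [show u (2 * (k + 1)) = u (2 * k + 2) from rfl]
  have key : ∀ v : Fin (2 * m) → ZMod 2,
      (if Extends (2 * k + 1) u (u (2 * k + 1)) (u (2 * k + 2)) v then
        likelihood W (permMatrix I (2 * m) * interKron A) y v else 0) =
      ∑ d : ZMod 2,
        (if Extends k (fun t => u (swapPerm I (2 * t)) + u (swapPerm I (2 * t + 1)))
          (u (swapPerm I (2 * k)) + u (2 * k + 1)) (u (2 * k + 2) + d) (splitEquiv hI v).1 then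
          likelihood W A (fun j => y (evenIdx j)) (splitEquiv hI v).1 else 0) *
        (if Extends k (fun t => u (swapPerm I (2 * t + 1))) (u (2 * k + 1)) d
          (splitEquiv hI v).2 then
          likelihood W A (fun j => y (oddIdx j)) (splitEquiv hI v).2 else 0) := by
    intro v
    simp_rw [ite_zero_mul_ite_zero, constraint_iff hI k hk hmem u v, ite_and,
      Finset.sum_ite_eq, Finset.mem_univ, if_true, likelihood_split W hI]
  simp_rw [key]
  rw [Finset.sum_comm, Finset.mul_sum, Finset.mul_sum]
  refine Finset.sum_congr rfl fun d _ => ?_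
  -- `F` and `H` are the summands of the two length-`m` channels, as functions of `s` and of `t`.
  let F : (Fin m → ZMod 2) → ℝ := fun s =>
    if Extends k (fun t => u (swapPerm I (2 * t)) + u (swapPerm I (2 * t + 1)))
      (u (swapPerm I (2 * k)) + u (2 * k + 1)) (u (2 * k + 2) + d) s then
      likelihood W A (fun j => y (evenIdx j)) s else 0
  let H : (Fin m → ZMod 2) → ℝ := fun t =>
    if Extends k (fun t => u (swapPerm I (2 * t + 1))) (u (2 * k + 1)) d t then
      likelihood W A (fun j => y (oddIdx j)) t else 0
  have hsum : ∑ v, F (splitEquiv hI v).1 * H (splitEquiv hI v).2 = (∑ s, F s) * ∑ t, H t := by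
    rw [Equiv.sum_comp (splitEquiv hI) (fun p => F p.1 * H p.2), Fintype.sum_prod_type,
      Finset.sum_mul_sum]
  change 4 * (1 / 2 : ℝ) ^ (2 * m) * ∑ v, F (splitEquiv hI v).1 * H (splitEquiv hI v).2 =
    1 / 4 * (4 * (1 / 2 : ℝ) ^ m * (∑ s, F s) * (4 * (1 / 2 : ℝ) ^ m * ∑ t, H t))
  rw [hsum, two_mul m, pow_add]
  ring
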